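/- arXiv:2109.01645 — 7 statements merged into one kernel-verified Lean document; each statement's English description precedes it below -/
import Mathlib

section
/- Let K be a field and n ≥ 1. Let S be a finite type equipped with two maps r, c : S → Fin n, and assume the equivalence relation on Fin n generated by the pairs (r q, c q) for q ∈ S is the total relation (i.e., the graph on Fin n with an edge {r q, c q} for each q ∈ S is connected). Let the torus (Kˣ)ⁿ act on (Kˣ)^S by ((λ · x) q) = (λ (r q))⁻¹ * (x q) * (λ (c q)). Then for every x ∈ (Kˣ)^S, the stabilizer of x is exactly the diagonal subgroup of constant tuples: one has λ · x = x if and only if λ i = λ j for all i, j ∈ Fin n. In particular, Fintype.card S ≥ n − 1. -/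
/-!
A tuple on the vertices of a connected graph that agrees at the two ends of every edge is constant
(`eq_of_eqvGen_of_forall_edge`). Over a commutative group, the fixed-point equation at `q` says
exactly `lam (r q) = lam (c q)`, which gives the description of the stabilizer. The bound on the
number of edges comes from the same lemma applied additively, over `ℚ`: the coboundary map
`v ↦ (q ↦ v (c q) - v (r q))` has only constants in its kernel, so together with the evaluation at
one vertex it embeds `ℚⁿ` into `ℚ^S × ℚ`. Working over `ℚ` rather than with `Kˣ` matters, since
`Kˣ` may be trivial.
-/

theorem eq_of_eqvGen_of_forall_edge {V S A : Type*} {r c : S → V} {f : V → A}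
    (hf : ∀ q, f (r q) = f (c q)) {i j : V}
    (h : Relation.EqvGen (fun a b => ∃ q : S, r q = a ∧ c q = b) i j) : f i = f j := by
  induction h with
  | rel a b h =>
    obtain ⟨q, rfl, rfl⟩ := h
    exact hf q
  | refl a => rfl
  | symm a b _ ih => exact ih.symm
  | trans a b d _ _ ih₁ ih₂ => exact ih₁.trans ih₂

theorem card_le_card_edges_add_one {n : ℕ} {S : Type*} [Fintype S] {r c : S → Fin n}
    (hconn : ∀ i j : Fin n,
      Relation.EqvGen (fun a b => ∃ q : S, r q = a ∧ c q = b) i j) (i₀ : Fin n) :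
    n ≤ Fintype.card S + 1 := by
  let φ : (Fin n → ℚ) →ₗ[ℚ] (S → ℚ) × ℚ :=
    { toFun := fun v => (fun q => v (c q) - v (r q), v i₀)
      map_add' := fun v w => by
        ext <;> simp [add_sub_add_comm]
      map_smul' := fun a v => by
        ext <;> simp [mul_sub] }
  have hφ : Function.Injective φ := by
    rw [injective_iff_map_eq_zero]
    intro v hv
    have hedge : ∀ q, v (r q) = v (c q) := fun q =>
      (sub_eq_zero.mp (congrFun (congrArg Prod.fst hv) q)).symm
    have hbase : v i₀ = 0 := congrArg Prod.snd hv
    funext i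
    exact (eq_of_eqvGen_of_forall_edge hedge (hconn i i₀)).trans hbase
  simpa using LinearMap.finrank_le_finrank_of_injective hφ

/-- The algebraic core of the free torus action lemmas: if the graph on `Fin n` with an edge
`{r q, c q}` for each `q : S` is connected (its generated equivalence relation is total),
then for the action of the torus `(Kˣ)ⁿ` on `(Kˣ)^S` given by
`(λ • x) q = (λ (r q))⁻¹ * x q * (λ (c q))`, the stabilizer of every point is exactly the
diagonal subgroup of constant tuples; in particular `Fintype.card S ≥ n - 1`. -/
theorem stabilizer_of_torus_action_eq_diagonal_of_connected
    (K : Type*) [Field K] (n : ℕ) (hn : 1 ≤ n)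
    (S : Type*) [Fintype S] (r c : S → Fin n)
    (hconn : ∀ i j : Fin n,
      Relation.EqvGen (fun a b => ∃ q : S, r q = a ∧ c q = b) i j) :
    (∀ (x : S → Kˣ) (lam : Fin n → Kˣ),
      ((∀ q : S, (lam (r q))⁻¹ * x q * lam (c q) = x q) ↔ ∀ i j : Fin n, lam i = lam j)) ∧
    n - 1 ≤ Fintype.card S := by
  refine ⟨fun x lam => ⟨fun h i j => ?_, fun h q => ?_⟩, ?_⟩
  · refine eq_of_eqvGen_of_forall_edge (fun q => ?_) (hconn i j)
    have hq := h q
    rw [mul_right_comm, mul_eq_right] at hq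
    exact inv_mul_eq_one.mp hq
  · rw [mul_right_comm, h (r q) (c q), inv_mul_cancel, one_mul]
  · exact Nat.sub_le_of_le_add (card_le_card_edges_add_one hconn ⟨0, hn⟩)
end

section
/- Let K be a field and n ≥ 1. Let r, c : Fin (n−1) → Fin n be maps such that the equivalence relation on Fin n generated by the pairs (r q, c q) is the total relation (the graph on Fin n with edges {r q, c q} is connected; since it has n−1 edges it is a spanning tree). Then the group homomorphism φ : (Kˣ)ⁿ → (Kˣ)^{n−1} defined by (φ λ) q = (λ (r q))⁻¹ * (λ (c q)) is surjective, and its kernel is exactly the diagonal subgroup of constant tuples. -/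
/-!
Both claims hold with any commutative group in place of `Kˣ`. The kernel statement is immediate
from connectedness. For surjectivity, write `n = m + 1` and let `A` be the square integer matrix
`incidence r c` whose row `0` is `e₀` and whose row `q + 1` is `e_{c q} - e_{r q}`. Connectedness
says that every `eᵢ` is an integral combination of the rows, so `A` has a left inverse
`B` over `ℤ` (`exists_combination`); since it is square, `A * B = 1` as well. This is where the
number of edges being exactly `n - 1` is used. Given the target tuple `μ`, extended by `ν₀ = 1`,
the tuple `λᵢ = ∏ₖ νₖ ^ B i k` is then a preimage.
-/

/-- The oriented incidence matrix of the edges `r q → c q` on the vertices `Fin (m + 1)`, with an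
extra row `0` equal to the basis vector `e₀`, which makes it square. -/
def incidence {m : ℕ} (r c : Fin m → Fin (m + 1)) : Matrix (Fin (m + 1)) (Fin (m + 1)) ℤ :=
  Matrix.of (Fin.cons (Pi.single 0 1) (fun q => Pi.single (c q) 1 - Pi.single (r q) 1))

/-- A function constant along every pair of a relation is constant on the classes of the
equivalence relation it generates. -/
theorem eq_of_eqvGen {α β : Type*} {R : α → α → Prop} (f : α → β)
    (hf : ∀ a b, R a b → f a = f b) {i j : α} (h : Relation.EqvGen R i j) : f i = f j := by
  induction h with
  | rel a b hab => exact hf a b hab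
  | refl a => rfl
  | symm a b _ ih => exact ih.symm
  | trans a b d _ _ ih₁ ih₂ => exact ih₁.trans ih₂

/-- For a connected graph each basis vector is an integral combination of the rows of the
incidence matrix: true of `e₀`, and transported along the edges. -/
theorem exists_combination {m : ℕ} (r c : Fin m → Fin (m + 1))
    (hconn : ∀ i j : Fin (m + 1),
      Relation.EqvGen (fun a b => ∃ q : Fin m, r q = a ∧ c q = b) i j) (i : Fin (m + 1)) :
    ∃ b : Fin (m + 1) → ℤ, Matrix.vecMul b (incidence r c) = Pi.single i 1 := by
  have hrow : ∀ q : Fin m, Matrix.vecMul (Pi.single q.succ 1) (incidence r c)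
      = Pi.single (c q) 1 - Pi.single (r q) 1 := by
    intro q
    rw [Matrix.single_one_vecMul]
    rfl
  have key := eq_of_eqvGen
    (fun i => ∃ b : Fin (m + 1) → ℤ, Matrix.vecMul b (incidence r c) = Pi.single i 1) ?_
    (hconn 0 i)
  · rw [← key]
    refine ⟨Pi.single 0 1, ?_⟩
    rw [Matrix.single_one_vecMul]
    rfl
  · rintro _ _ ⟨q, rfl, rfl⟩
    apply propext
    constructor
    · rintro ⟨b, hb⟩
      exact ⟨b + Pi.single q.succ 1, by rw [Matrix.add_vecMul, hb, hrow]; abel⟩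
    · rintro ⟨b, hb⟩
      exact ⟨b - Pi.single q.succ 1, by rw [Matrix.sub_vecMul, hb, hrow]; abel⟩

theorem surjective_of_connected {G : Type*} [CommGroup G] {m : ℕ} (r c : Fin m → Fin (m + 1))
    (hconn : ∀ i j : Fin (m + 1),
      Relation.EqvGen (fun a b => ∃ q : Fin m, r q = a ∧ c q = b) i j) (μ : Fin m → G) :
    ∃ lam : Fin (m + 1) → G, ∀ q, (lam (r q))⁻¹ * lam (c q) = μ q := by
  choose B hB using exists_combination r c hconn
  have hBA : Matrix.of B * incidence r c = 1 := by
    ext i j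
    rw [Matrix.mul_apply_eq_vecMul, Matrix.one_apply]
    refine (congrFun (hB i) j).trans ?_
    simp only [Pi.single_apply, eq_comm]
  have hAB : incidence r c * Matrix.of B = 1 := mul_eq_one_comm.mp hBA
  have hdiff : ∀ q k, B (c q) k - B (r q) k = if q.succ = k then 1 else 0 := by
    intro q k
    have h := congrFun (congrFun hAB q.succ) k
    rw [Matrix.one_apply] at h
    rw [← h]
    simp [Matrix.mul_apply, incidence, sub_mul, Finset.sum_sub_distrib, Pi.single_apply]
  let ν : Fin (m + 1) → G := Fin.cons 1 μ
  refine ⟨fun i => ∏ k, ν k ^ B i k, fun q => ?_⟩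
  calc (∏ k, ν k ^ B (r q) k)⁻¹ * ∏ k, ν k ^ B (c q) k
      = ∏ k, ν k ^ (B (c q) k - B (r q) k) := by
        rw [← Finset.prod_inv_distrib, ← Finset.prod_mul_distrib]
        exact Finset.prod_congr rfl fun k _ => by rw [zpow_sub, mul_comm]
    _ = ν q.succ := by
        simp only [hdiff]
        rw [Finset.prod_eq_single q.succ]
        · simp
        · intro k _ hk
          simp [hk.symm]
        · simp
    _ = μ q := rfl

/-- If the graph on `Fin n` with the `n - 1` edges `{r q, c q}` is connected (i.e. the
equivalence relation generated by the pairs `(r q, c q)` is total), then the group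
homomorphism `(Kˣ)ⁿ → (Kˣ)^{n-1}`, `λ ↦ (q ↦ (λ (r q))⁻¹ * λ (c q))`, is surjective and
its kernel is exactly the diagonal subgroup of constant tuples. -/
theorem surjective_and_kernel_diagonal_of_spanning_tree
    (K : Type*) [Field K] (n : ℕ) (hn : 1 ≤ n)
    (r c : Fin (n - 1) → Fin n)
    (hconn : ∀ i j : Fin n,
      Relation.EqvGen (fun a b => ∃ q : Fin (n - 1), r q = a ∧ c q = b) i j) :
    Function.Surjective
      (fun (lam : Fin n → Kˣ) => fun q : Fin (n - 1) => (lam (r q))⁻¹ * lam (c q)) ∧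
    ∀ lam : Fin n → Kˣ,
      ((fun q : Fin (n - 1) => (lam (r q))⁻¹ * lam (c q)) = fun _ => 1) ↔
        ∀ i j : Fin n, lam i = lam j := by
  obtain ⟨m, rfl⟩ : ∃ m, n = m + 1 := ⟨n - 1, by omega⟩
  refine ⟨fun μ => ?_, fun lam => ⟨fun h i j => ?_, fun h => ?_⟩⟩
  · obtain ⟨lam, hlam⟩ := surjective_of_connected r c hconn μ
    exact ⟨lam, funext hlam⟩
  · refine eq_of_eqvGen lam ?_ (hconn i j)
    rintro _ _ ⟨q, rfl, rfl⟩
    exact inv_mul_eq_one.mp (congrFun h q)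
  · funext q
    exact inv_mul_eq_one.mpr (h _ _)
end

section
/- Let K be a field, m ∈ ℕ, and μ : Fin m → ℤ (a Maslov potential). Let C = (Fin m → K) with standard basis (f_1, …, f_m), and let d : C →ₗ[K] C be a K-linear map such that: (i) for all i, j, the coefficient of f_j in d(f_i) is nonzero only if i < j and μ(j) = μ(i) − 1; (ii) d ∘ d = 0; (iii) the complex (C, d) is acyclic, i.e. ker d = range d. Then there exist a K-linear automorphism φ of C of the triangular form φ(f_i) = f_i + Σ_{j > i, μ(j) = μ(i)} c_{ij} f_j (c_{ij} ∈ K) and a fixed-point-free involution ρ of Fin m such that for every i with i < ρ(i): μ(i) = μ(ρ(i)) + 1, (φ⁻¹ ∘ d ∘ φ)(f_i) = u_i · f_{ρ(i)} for some unit u_i ∈ Kˣ, and (φ⁻¹ ∘ d ∘ φ)(f_{ρ(i)}) = 0. Moreover, the fixed-point-free involution ρ for which such a φ exists is unique. -/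
/-!
Call a vector *monic at `i`* if it is `f_i` plus a combination of later basis vectors of the same
degree; a unipotent triangular map is the same as a choice of one monic vector at each `i`, and
any such choice is a basis (`exists_equiv`), because triangular maps preserve leading terms.

Existence. Let `A` be the set of `i` admitting no monic cycle. For `i ∈ A` take a monic vector
`v i` whose boundary starts as late as possible, at the index `p i` say (`exists_optimal`). If
`p i = p k` with `i < k`, subtracting a multiple of `v k` from `v i` would push the boundary
further, so `p` is injective on `A`. The normalised `d (v i)` is a monic cycle at `p i`, so `p`
takes values outside `A`. By acyclicity a monic cycle at `i ∉ A` is a combination of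
the vectors `d (v k)`, `k ∈ A`, whose leading indices are distinct; comparing leading indices gives
`i = p k` for some `k`. Thus `p : A → Aᶜ` is bijective, and `ρ` is `p` on `A` and its inverse
off `A`; the basis is `v i` for `i ∈ A` together with the normalised `d (v i)`.

Uniqueness. In a normal form with `i < ρ i`, any vector with leading index `i` has a boundary
starting no later than `ρ i` (`NormalForm.boundary_lead`). Applied to the basis of another normal
form, this bounds one involution by the other, and by symmetry they agree.
-/

/-- A linear endomorphism `φ` of `Fin m → K` has the unipotent triangular form
`φ(f_i) = f_i + Σ_{j > i, μ j = μ i} c_{ij} f_j` with respect to the standard basis `f_i`. -/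
def UnipotentTriangular {K : Type*} [Field K] {m : ℕ} (μ : Fin m → ℤ)
    (φ : (Fin m → K) →ₗ[K] (Fin m → K)) : Prop :=
  ∀ i : Fin m, φ (Pi.single i 1) i = 1 ∧
    ∀ j : Fin m, j ≠ i → φ (Pi.single i 1) j ≠ 0 → i < j ∧ μ j = μ i

/-- `v` is `f_i` plus a combination of basis vectors `f_j` with `j > i` and `μ j = μ i`. -/
def MonicAt {K : Type*} [Field K] {m : ℕ} (μ : Fin m → ℤ) (i : Fin m) (v : Fin m → K) : Prop :=
  v i = 1 ∧ ∀ j : Fin m, j ≠ i → v j ≠ 0 → i < j ∧ μ j = μ i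

/-- The data required of an involution `ρ`: a unipotent triangular `φ` bringing `d` to the normal
form prescribed by `ρ`. -/
def NormalForm {K : Type*} [Field K] {m : ℕ} (μ : Fin m → ℤ)
    (d : (Fin m → K) →ₗ[K] (Fin m → K)) (ρ : Fin m → Fin m)
    (φ : (Fin m → K) ≃ₗ[K] (Fin m → K)) : Prop :=
  UnipotentTriangular μ φ.toLinearMap ∧
    ∀ i : Fin m, i < ρ i →
      μ i = μ (ρ i) + 1 ∧
      (∃ u : Kˣ, (φ.symm.toLinearMap ∘ₗ d ∘ₗ φ.toLinearMap) (Pi.single i 1)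
          = (u : K) • (Pi.single (ρ i) 1 : Fin m → K)) ∧
      (φ.symm.toLinearMap ∘ₗ d ∘ₗ φ.toLinearMap) (Pi.single (ρ i) 1) = 0

section

variable {K : Type*} [Field K] {m : ℕ} {μ : Fin m → ℤ}

theorem apply_eq_sum (f : (Fin m → K) →ₗ[K] (Fin m → K)) (x : Fin m → K) :
    f x = ∑ k, x k • f (Pi.single k 1) := by
  conv_lhs => rw [pi_eq_sum_univ' x]
  simp [map_sum, map_smul]

theorem apply_coord (f : (Fin m → K) →ₗ[K] (Fin m → K)) (x : Fin m → K) (j : Fin m) :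
    f x j = ∑ k, x k * f (Pi.single k 1) j := by
  rw [apply_eq_sum f x]; simp

theorem MonicAt.le {i j : Fin m} {v : Fin m → K} (h : MonicAt μ i v) (hj : v j ≠ 0) :
    i ≤ j ∧ μ j = μ i := by
  by_cases hji : j = i
  · subst hji; simp
  · exact ⟨(h.2 j hji hj).1.le, (h.2 j hji hj).2⟩

theorem MonicAt.eq_zero {i j : Fin m} {v : Fin m → K} (h : MonicAt μ i v) (hj : j < i) :
    v j = 0 := by
  by_contra hne
  exact absurd (h.le hne).1 (not_le.mpr hj)

theorem monicAt_sub {i k : Fin m} {v w : Fin m → K} (hv : MonicAt μ i v) (hw : MonicAt μ k w)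
    (hik : i < k) (hμ : μ k = μ i) (c : K) : MonicAt μ i (v - c • w) := by
  refine ⟨by simp [hv.1, hw.eq_zero hik], fun j hj hne => ?_⟩
  by_cases hvj : v j = 0
  · have hwj : w j ≠ 0 := by
      intro h0; apply hne; simp [hvj, h0]
    have := hw.le hwj
    exact ⟨lt_of_lt_of_le hik this.1, this.2.trans hμ⟩
  · exact hv.2 j hj hvj

/-- Unipotent triangular maps preserve leading terms. -/
theorem triangular_lead {φ : (Fin m → K) →ₗ[K] (Fin m → K)} (hφ : UnipotentTriangular μ φ)
    {x : Fin m → K} {i : Fin m} (hx : ∀ j < i, x j = 0) :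
    (∀ j < i, φ x j = 0) ∧ φ x i = x i := by
  have key : ∀ j ≤ i, φ x j = x j := by
    intro j hj
    rw [apply_coord, Finset.sum_eq_single j]
    · rw [(hφ j).1, mul_one]
    · intro k _ hkj
      rcases lt_or_ge k i with hk | hk
      · rw [hx k hk, zero_mul]
      · rw [MonicAt.eq_zero (hφ k) (lt_of_le_of_ne (hj.trans hk) (Ne.symm hkj)), mul_zero]
    · simp
  exact ⟨fun j hj => (key j hj.le).trans (hx j hj), key i le_rfl⟩

theorem triangular_reflect {φ : (Fin m → K) →ₗ[K] (Fin m → K)} (hφ : UnipotentTriangular μ φ)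
    {x : Fin m → K} {i : Fin m} (hx : ∀ j < i, φ x j = 0) : ∀ j < i, x j = 0 := by
  intro j
  induction j using WellFoundedLT.induction with
  | ind j ih =>
    intro hj
    rw [← (triangular_lead hφ (i := j) fun k hk => ih k hk (hk.trans hj)).2]
    exact hx j hj

/-- A choice of a monic vector at each index is the image of the standard basis under a unipotent
triangular automorphism. -/
theorem exists_equiv (e : Fin m → Fin m → K) (he : ∀ i, MonicAt μ i (e i)) :
    ∃ φ : (Fin m → K) ≃ₗ[K] (Fin m → K), UnipotentTriangular μ φ.toLinearMap ∧
      ∀ i, φ (Pi.single i 1) = e i := by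
  let f : (Fin m → K) →ₗ[K] (Fin m → K) := (Pi.basisFun K (Fin m)).constr K e
  have hf : ∀ i, f (Pi.single i 1) = e i := fun i => by
    rw [← Pi.basisFun_apply]
    exact (Pi.basisFun K (Fin m)).constr_basis K e i
  have hU : UnipotentTriangular μ f := fun i => by
    have := he i
    rw [← hf i] at this
    exact this
  have hinj : Function.Injective f := by
    rw [injective_iff_map_eq_zero]
    intro x hx
    funext i
    have h0 := triangular_reflect hU (x := x) (i := i) (by simp [hx])
    rw [← (triangular_lead hU h0).2, hx]
  exact ⟨LinearEquiv.ofInjectiveEndo f hinj, fun i => hU i, hf⟩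

section boundary

variable {d : (Fin m → K) →ₗ[K] (Fin m → K)}

theorem MonicAt.boundary
    (htri : ∀ i j : Fin m, d (Pi.single i 1) j ≠ 0 → i < j ∧ μ j = μ i - 1)
    {i j : Fin m} {v : Fin m → K} (hv : MonicAt μ i v) (hj : d v j ≠ 0) :
    i < j ∧ μ j = μ i - 1 := by
  rw [apply_coord] at hj
  obtain ⟨k, -, hk⟩ := Finset.exists_ne_zero_of_sum_ne_zero hj
  have h1 := hv.le (left_ne_zero_of_mul hk)
  have h2 := htri k j (right_ne_zero_of_mul hk)
  exact ⟨lt_of_le_of_lt h1.1 h2.1, by rw [h2.2, h1.2]⟩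

/-- If there is no monic cycle at `i`, some monic vector at `i` has a boundary whose leading index
`l` is as large as possible. -/
theorem exists_optimal {i : Fin m} (hi : ¬ ∃ v, MonicAt μ i v ∧ d v = 0) :
    ∃ (l : Fin m) (v : Fin m → K), MonicAt μ i v ∧ (∀ j < l, d v j = 0) ∧ d v l ≠ 0 ∧
      ∀ w, MonicAt μ i w → ∃ j ≤ l, d w j ≠ 0 := by
  classical
  let P : ℕ → Prop := fun n => ∃ v, MonicAt μ i v ∧ ∀ j : Fin m, j.val < n → d v j = 0
  have h0 : P 0 := by
    refine ⟨Pi.single i 1, ⟨by simp, fun j hj hne => ?_⟩, by simp⟩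
    exact absurd (Pi.single_eq_of_ne hj 1) hne
  have hm : ¬ P m := by
    rintro ⟨v, hv, hd⟩
    exact hi ⟨v, hv, funext fun j => hd j j.isLt⟩
  set n := Nat.findGreatest P m with hn
  have hPn : P n := Nat.findGreatest_spec (Nat.zero_le m) h0
  have hlt : n < m := lt_of_le_of_ne (Nat.findGreatest_le m) fun h => hm (h ▸ hPn)
  have hmax : ¬ P (n + 1) := Nat.findGreatest_is_greatest (Nat.lt_succ_self n) hlt
  have hmax' : ∀ w, MonicAt μ i w → ∃ j ≤ (⟨n, hlt⟩ : Fin m), d w j ≠ 0 := by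
    intro w hw
    by_contra! hcon
    exact hmax ⟨w, hw, fun j hj => hcon j (Nat.lt_succ_iff.mp hj)⟩
  obtain ⟨v, hv, hd⟩ := hPn
  refine ⟨⟨n, hlt⟩, v, hv, fun j hj => hd j hj, ?_, hmax'⟩
  obtain ⟨j, hj, hne⟩ := hmax' v hv
  rcases hj.lt_or_eq with h | h
  · exact absurd (hd j h) hne
  · exact h ▸ hne

theorem NormalForm.boundary_eq {ρ : Fin m → Fin m} {φ : (Fin m → K) ≃ₗ[K] (Fin m → K)}
    (h : NormalForm μ d ρ φ) {i : Fin m} (hi : i < ρ i) :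
    (∃ u : Kˣ, d (φ (Pi.single i 1)) = (u : K) • φ (Pi.single (ρ i) 1)) ∧
      d (φ (Pi.single (ρ i) 1)) = 0 := by
  obtain ⟨-, ⟨u, hu⟩, h0⟩ := h.2 i hi
  refine ⟨⟨u, ?_⟩, ?_⟩
  · have := congrArg φ hu
    simpa using this
  · have := congrArg φ h0
    simpa using this

/-- In a normal form with `i < ρ i`, a vector with leading index `i` has a boundary starting no
later than `ρ i`: its coordinate at `ρ i` in the basis given by `φ` does not vanish. -/
theorem NormalForm.boundary_lead {ρ : Fin m → Fin m} (hρ : Function.Involutive ρ)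
    (hfix : ∀ i, ρ i ≠ i) {φ : (Fin m → K) ≃ₗ[K] (Fin m → K)}
    (h : NormalForm μ d ρ φ) {i : Fin m} (hi : i < ρ i) {v : Fin m → K}
    (hv : ∀ j < i, v j = 0) (hvi : v i ≠ 0) : ∃ l ≤ ρ i, d v l ≠ 0 := by
  by_contra! hcon
  set D := φ.symm.toLinearMap ∘ₗ d ∘ₗ φ.toLinearMap with hD
  set y := φ.symm v with hy
  have hφy : φ y = v := by simp [hy]
  have hy0 : ∀ j < i, y j = 0 :=
    triangular_reflect h.1 (x := y) (by intro j hj; simpa [hφy] using hv j hj)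
  have hyi : y i = v i := by
    have := (triangular_lead h.1 hy0).2
    simpa [hφy] using this.symm
  have hDy : φ (D y) = d v := by simp [hD, hφy]
  have hDy0 : ∀ j < ρ i, D y j = 0 :=
    triangular_reflect h.1 (x := D y) (by
      intro j hj
      have := hcon j hj.le
      rwa [← hDy] at this)
  have hz : D y (ρ i) = 0 := by
    have := (triangular_lead h.1 hDy0).2
    rw [← this]
    have := hcon (ρ i) le_rfl
    rwa [← hDy] at this
  obtain ⟨-, ⟨u, hu⟩, -⟩ := h.2 i hi
  rw [apply_coord, Finset.sum_eq_single i] at hz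
  · rw [← hD] at hu
    rw [hu] at hz
    simp [hyi, hvi] at hz
  · intro k _ hki
    rcases lt_or_gt_of_ne (hfix k) with hk | hk
    · have := (h.2 (ρ k) (by rwa [hρ k])).2.2
      rw [hρ k, ← hD] at this
      rw [this]; simp
    · obtain ⟨-, ⟨u', hu'⟩, -⟩ := h.2 k hk
      rw [← hD] at hu'
      have hne : ρ i ≠ ρ k := fun hh => hki (hρ.injective hh).symm
      rw [hu']; simp [Pi.single_eq_of_ne hne]
  · simp

theorem NormalForm.le {ρ ρ' : Fin m → Fin m} (hρ : Function.Involutive ρ)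
    (hfix : ∀ i, ρ i ≠ i) (hρ' : Function.Involutive ρ') (hfix' : ∀ i, ρ' i ≠ i)
    {φ φ' : (Fin m → K) ≃ₗ[K] (Fin m → K)}
    (h : NormalForm μ d ρ φ) (h' : NormalForm μ d ρ' φ') {i : Fin m} (hi : i < ρ i) :
    i < ρ' i ∧ ρ' i ≤ ρ i := by
  have hmon : MonicAt μ i (φ' (Pi.single i 1)) := h'.1 i
  obtain ⟨l, hl, hne⟩ := h.boundary_lead hρ hfix hi (v := φ' (Pi.single i 1))
    (fun j hj => hmon.eq_zero hj) (by rw [hmon.1]; exact one_ne_zero)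
  rcases lt_or_gt_of_ne (hfix' i) with hlt | hgt
  · have := (h'.boundary_eq (i := ρ' i) (by rwa [hρ' i])).2
    rw [hρ' i] at this
    simp [this] at hne
  · refine ⟨hgt, ?_⟩
    obtain ⟨⟨u, hu⟩, -⟩ := h'.boundary_eq hgt
    by_contra! hlt
    apply hne
    have hmon' : MonicAt μ (ρ' i) (φ' (Pi.single (ρ' i) 1)) := h'.1 (ρ' i)
    rw [hu]
    simp [hmon'.eq_zero (lt_of_le_of_lt hl hlt)]

theorem NormalForm.unique {ρ ρ' : Fin m → Fin m} (hρ : Function.Involutive ρ)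
    (hfix : ∀ i, ρ i ≠ i) (hρ' : Function.Involutive ρ') (hfix' : ∀ i, ρ' i ≠ i)
    {φ φ' : (Fin m → K) ≃ₗ[K] (Fin m → K)}
    (h : NormalForm μ d ρ φ) (h' : NormalForm μ d ρ' φ') : ρ' = ρ := by
  have key : ∀ i, i < ρ i → ρ' i = ρ i := fun i hi => by
    obtain ⟨h1, h2⟩ := h.le hρ hfix hρ' hfix' h' hi
    exact le_antisymm h2 (h'.le hρ' hfix' hρ hfix h h1).2
  funext i
  rcases lt_or_gt_of_ne (hfix i) with hlt | hgt
  · have := key (ρ i) (by rwa [hρ i])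
    rw [hρ i] at this
    conv_lhs => rw [← this]
    exact hρ' (ρ i)
  · exact key i hgt

theorem NormalForm.exists
    (htri : ∀ i j : Fin m, d (Pi.single i 1) j ≠ 0 → i < j ∧ μ j = μ i - 1)
    (hdd : d ∘ₗ d = 0) (hacyclic : LinearMap.ker d = LinearMap.range d) :
    ∃ ρ : Fin m → Fin m, Function.Involutive ρ ∧ (∀ i, ρ i ≠ i) ∧
      ∃ φ : (Fin m → K) ≃ₗ[K] (Fin m → K), NormalForm μ d ρ φ := by
  classical
  have hdd' : ∀ x, d (d x) = 0 := fun x => LinearMap.congr_fun hdd x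
  -- `Z i` says that there is a monic cycle at `i`.
  let Z : Fin m → Prop := fun i => ∃ v, MonicAt μ i v ∧ d v = 0
  have hch : ∀ i, ∃ (l : Fin m) (v : Fin m → K), MonicAt μ i v ∧ (Z i → d v = 0) ∧
      (¬ Z i → (∀ j < l, d v j = 0) ∧ d v l ≠ 0 ∧ ∀ w, MonicAt μ i w → ∃ j ≤ l, d w j ≠ 0) := by
    intro i
    by_cases hi : Z i
    · obtain ⟨v, hv, hd⟩ := id hi
      exact ⟨i, v, hv, fun _ => hd, fun h => absurd hi h⟩
    · obtain ⟨l, v, hv, h⟩ := exists_optimal hi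
      exact ⟨l, v, hv, fun h => absurd h hi, fun _ => h⟩
  choose p v hv hZ hA using hch
  have hbd : ∀ i, ¬ Z i → i < p i ∧ μ (p i) = μ i - 1 := fun i hi =>
    (hv i).boundary htri (hA i hi).2.1
  have hinj_lt : ∀ i k, ¬ Z i → ¬ Z k → i < k → p i ≠ p k := by
    intro i k hi hk hik hp
    have hμ : μ k = μ i := by
      have h1 := (hbd i hi).2
      have h2 := (hbd k hk).2
      rw [← hp] at h2; omega
    -- This multiple of `v k` cancels the leading term of `d (v i)`.
    obtain ⟨j, hj, hne⟩ := (hA i hi).2.2 _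
      (monicAt_sub (hv i) (hv k) hik hμ (d (v i) (p i) / d (v k) (p i)))
    apply hne
    rcases hj.lt_or_eq with hlt | rfl
    · simp [(hA i hi).1 j hlt, (hA k hk).1 j (hp ▸ hlt)]
    · have : d (v k) (p i) ≠ 0 := hp ▸ (hA k hk).2.1
      simp [this]
  have hinj : ∀ i k, ¬ Z i → ¬ Z k → p i = p k → i = k := by
    intro i k hi hk hp
    rcases lt_trichotomy i k with h | h | h
    · exact absurd hp (hinj_lt i k hi hk h)
    · exact h
    · exact absurd hp.symm (hinj_lt k i hk hi h)
  have hmon : ∀ i, ¬ Z i → MonicAt μ (p i) ((d (v i) (p i))⁻¹ • d (v i)) := by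
    intro i hi
    refine ⟨by simp [(hA i hi).2.1], fun j hj hne => ?_⟩
    have hne' : d (v i) j ≠ 0 := fun h0 => hne (by simp [h0])
    refine ⟨lt_of_le_of_ne (not_lt.mp fun h => hne' ((hA i hi).1 j h)) (Ne.symm hj), ?_⟩
    rw [((hv i).boundary htri hne').2, (hbd i hi).2]
  have hpZ : ∀ i, ¬ Z i → Z (p i) := fun i hi => ⟨_, hmon i hi, by simp [hdd']⟩
  have hsurj : ∀ i, Z i → ∃ k, ¬ Z k ∧ p k = i := by
    intro i hi
    obtain ⟨φ, -, hφ⟩ := exists_equiv v hv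
    obtain ⟨x, hx⟩ : v i ∈ LinearMap.range d := by
      rw [← hacyclic]; exact hZ i hi
    set y := φ.symm x with hy
    have hsum : ∀ j, v i j = ∑ k, y k * d (v k) j := by
      intro j
      have := apply_coord (d ∘ₗ φ.toLinearMap) y j
      simpa [hφ, hy, hx] using this
    let S : Finset (Fin m) := Finset.univ.filter fun k => ¬ Z k ∧ y k ≠ 0
    have hS : ∀ k, k ∉ S → ∀ j, y k * d (v k) j = 0 := by
      intro k hk j
      by_cases hkZ : Z k
      · simp [hZ k hkZ]
      · have : y k = 0 := by
          by_contra h0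
          exact hk (by simp [S, hkZ, h0])
        simp [this]
    have hne : S.Nonempty := by
      by_contra hemp
      rw [Finset.not_nonempty_iff_eq_empty] at hemp
      have := hsum i
      rw [Finset.sum_eq_zero fun k _ => hS k (by simp [hemp]) i, (hv i).1] at this
      exact one_ne_zero this
    obtain ⟨k, hkS, hmin⟩ := S.exists_min_image p hne
    have hk : ¬ Z k ∧ y k ≠ 0 := by simpa [S] using hkS
    refine ⟨k, hk.1, le_antisymm ?_ ?_⟩
    · by_contra! hlt
      have := hsum i
      rw [Finset.sum_eq_zero, (hv i).1] at this
      · exact one_ne_zero this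
      · intro k' _
        by_cases hk' : k' ∈ S
        · have hk'' : ¬ Z k' ∧ y k' ≠ 0 := by simpa [S] using hk'
          rw [(hA k' hk''.1).1 i (lt_of_lt_of_le hlt (hmin k' hk')), mul_zero]
        · exact hS k' hk' i
    · by_contra! hlt
      have := hsum (p k)
      rw [(hv i).eq_zero hlt, Finset.sum_eq_single k] at this
      · exact mul_ne_zero hk.2 (hA k hk.1).2.1 this.symm
      · intro k' _ hkk'
        by_cases hk' : k' ∈ S
        · have hk'' : ¬ Z k' ∧ y k' ≠ 0 := by simpa [S] using hk'
          have hlt' : p k < p k' := lt_of_le_of_ne (hmin k' hk')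
            fun h => hkk' (hinj k k' hk.1 hk''.1 h).symm
          rw [(hA k' hk''.1).1 _ hlt', mul_zero]
        · exact hS k' hk' _
      · simp
  choose! q hqZ hpq using hsurj
  have hqp : ∀ i, ¬ Z i → q (p i) = i := fun i hi =>
    hinj _ _ (hqZ _ (hpZ i hi)) hi (hpq _ (hpZ i hi))
  let ρ : Fin m → Fin m := fun i => if Z i then q i else p i
  have hρZ : ∀ i, Z i → ρ i = q i := fun i hi => if_pos hi
  have hρA : ∀ i, ¬ Z i → ρ i = p i := fun i hi => if_neg hi
  have hqlt : ∀ i, Z i → q i < i := fun i hi => by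
    have := (hbd (q i) (hqZ i hi)).1
    rwa [hpq i hi] at this
  let e : Fin m → Fin m → K := fun i =>
    if Z i then (d (v (q i)) i)⁻¹ • d (v (q i)) else v i
  have heZ : ∀ i, Z i → e i = (d (v (q i)) i)⁻¹ • d (v (q i)) := fun i hi => if_pos hi
  have heA : ∀ i, ¬ Z i → e i = v i := fun i hi => if_neg hi
  have he : ∀ i, MonicAt μ i (e i) := by
    intro i
    by_cases hi : Z i
    · have := hmon (q i) (hqZ i hi)
      rw [hpq i hi] at this
      rwa [heZ i hi]
    · rw [heA i hi]; exact hv i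
  obtain ⟨φ, hU, hφ⟩ := exists_equiv e he
  refine ⟨ρ, fun i => ?_, fun i => ?_, φ, hU, fun i hi => ?_⟩
  · by_cases hi : Z i
    · rw [hρZ i hi, hρA _ (hqZ i hi), hpq i hi]
    · rw [hρA i hi, hρZ _ (hpZ i hi), hqp i hi]
  · by_cases hi : Z i
    · rw [hρZ i hi]; exact (hqlt i hi).ne
    · rw [hρA i hi]; exact (hbd i hi).1.ne'
  · have hiA : ¬ Z i := fun hiZ => by
      rw [hρZ i hiZ] at hi
      exact absurd hi (hqlt i hiZ).not_gt
    have hep : e (p i) = (d (v i) (p i))⁻¹ • d (v i) := by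
      rw [heZ _ (hpZ i hiA), hqp i hiA]
    have hne := (hA i hiA).2.1
    rw [hρA i hiA]
    refine ⟨by rw [(hbd i hiA).2]; ring, ⟨Units.mk0 _ hne, ?_⟩, ?_⟩
    · apply φ.injective
      simp [hφ, heA i hiA, hep, smul_smul, hne]
    · simp [hφ, hep, hdd']

end boundary

end

/-- Barannikov normal form: an acyclic, degree-1, strictly triangular (with respect to the
Maslov potential `μ`) differential `d` on `Fin m → K` can be brought, by a unipotent triangular
change of basis `φ`, to a normal form determined by a fixed-point-free involution `ρ` of
`Fin m`: for `i < ρ i`, one has `μ i = μ (ρ i) + 1`, `(φ⁻¹ ∘ d ∘ φ)(f_i) = u_i • f_{ρ i}` for a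
unit `u_i`, and `(φ⁻¹ ∘ d ∘ φ)(f_{ρ i}) = 0`. Moreover the involution `ρ` for which such a `φ`
exists is unique. -/
theorem barannikov_normal_form {K : Type*} [Field K] {m : ℕ} (μ : Fin m → ℤ)
    (d : (Fin m → K) →ₗ[K] (Fin m → K))
    (htri : ∀ i j : Fin m, d (Pi.single i 1) j ≠ 0 → i < j ∧ μ j = μ i - 1)
    (hdd : d ∘ₗ d = 0)
    (hacyclic : LinearMap.ker d = LinearMap.range d) :
    ∃! ρ : Fin m → Fin m,
      Function.Involutive ρ ∧ (∀ i, ρ i ≠ i) ∧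
      ∃ φ : (Fin m → K) ≃ₗ[K] (Fin m → K),
        UnipotentTriangular μ φ.toLinearMap ∧
        ∀ i : Fin m, i < ρ i →
          μ i = μ (ρ i) + 1 ∧
          (∃ u : Kˣ, (φ.symm.toLinearMap ∘ₗ d ∘ₗ φ.toLinearMap) (Pi.single i 1)
              = (u : K) • (Pi.single (ρ i) 1 : Fin m → K)) ∧
          (φ.symm.toLinearMap ∘ₗ d ∘ₗ φ.toLinearMap) (Pi.single (ρ i) 1) = 0 := by
  obtain ⟨ρ, hρ, hfix, φ, h⟩ := NormalForm.exists htri hdd hacyclic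
  refine ⟨ρ, ⟨hρ, hfix, φ, h⟩, ?_⟩
  rintro ρ' ⟨hρ', hfix', φ', h'⟩
  exact NormalForm.unique hρ hfix hρ' hfix' h h'
end

section
/- Let K be a field and let V = {α ∈ K³ : α₁ + α₃ + α₁α₂α₃ ≠ 0}. Define V₁ = {α ∈ K³ : α₁ ≠ 0 and 1 + α₁α₂ = 0}, V₂ = {α ∈ K³ : α₁ = 0 and α₃ ≠ 0}, and V₃ = {α ∈ K³ : α₁ ≠ 0, 1 + α₁α₂ ≠ 0, and α₁ + α₃ + α₁α₂α₃ ≠ 0}. Then V₁, V₂, V₃ are pairwise disjoint subsets of V whose union is all of V (in particular every α with α₁ ≠ 0 and 1 + α₁α₂ = 0 automatically satisfies α₁ + α₃ + α₁α₂α₃ = α₁ ≠ 0), and the maps α ↦ (α₁, α₃) and α ↦ (α₂, α₃) are bijections from V₁ onto Kˣ × K and from V₂ onto K × Kˣ respectively. -/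
/-!
Write `α₁ + α₃ + α₁α₂α₃ = α₁ + α₃ (1 + α₁α₂)`. On `1 + α₁α₂ = 0` this equals `α₁`, and on
`α₁ = 0` it equals `α₃`, so splitting `V` according to whether `α₁` and then `1 + α₁α₂` vanish
gives the three strata. On `V₁` the middle coordinate is determined as `α₂ = -α₁⁻¹`, and on `V₂`
the first coordinate is `0`, which gives the inverses of the two projections.
-/

/-- Ruling decomposition of the trefoil augmentation variety
`V = {α ∈ K³ : α₁ + α₃ + α₁α₂α₃ ≠ 0}`: the three strata
`V₁ = {α₁ ≠ 0, 1 + α₁α₂ = 0}`, `V₂ = {α₁ = 0, α₃ ≠ 0}`,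
`V₃ = {α₁ ≠ 0, 1 + α₁α₂ ≠ 0, α₁ + α₃ + α₁α₂α₃ ≠ 0}` are pairwise disjoint with union `V`
(in particular on `V₁` one has `α₁ + α₃ + α₁α₂α₃ = α₁`), and
`α ↦ (α₁, α₃)`, resp. `α ↦ (α₂, α₃)`, is a bijection from `V₁` onto `Kˣ × K`, resp. from
`V₂` onto `K × Kˣ`. -/
theorem trefoil_ruling_decomposition (K : Type*) [Field K] :
    ({α : K × K × K | α.1 ≠ 0 ∧ 1 + α.1 * α.2.1 = 0} ∪
      {α : K × K × K | α.1 = 0 ∧ α.2.2 ≠ 0} ∪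
      {α : K × K × K | α.1 ≠ 0 ∧ 1 + α.1 * α.2.1 ≠ 0 ∧
        α.1 + α.2.2 + α.1 * α.2.1 * α.2.2 ≠ 0})
      = {α : K × K × K | α.1 + α.2.2 + α.1 * α.2.1 * α.2.2 ≠ 0} ∧
    Disjoint {α : K × K × K | α.1 ≠ 0 ∧ 1 + α.1 * α.2.1 = 0}
      {α : K × K × K | α.1 = 0 ∧ α.2.2 ≠ 0} ∧
    Disjoint {α : K × K × K | α.1 ≠ 0 ∧ 1 + α.1 * α.2.1 = 0}
      {α : K × K × K | α.1 ≠ 0 ∧ 1 + α.1 * α.2.1 ≠ 0 ∧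
        α.1 + α.2.2 + α.1 * α.2.1 * α.2.2 ≠ 0} ∧
    Disjoint {α : K × K × K | α.1 = 0 ∧ α.2.2 ≠ 0}
      {α : K × K × K | α.1 ≠ 0 ∧ 1 + α.1 * α.2.1 ≠ 0 ∧
        α.1 + α.2.2 + α.1 * α.2.1 * α.2.2 ≠ 0} ∧
    (∀ α : K × K × K, α.1 ≠ 0 → 1 + α.1 * α.2.1 = 0 →
      α.1 + α.2.2 + α.1 * α.2.1 * α.2.2 = α.1) ∧
    Set.BijOn (fun α : K × K × K => (α.1, α.2.2))
      {α : K × K × K | α.1 ≠ 0 ∧ 1 + α.1 * α.2.1 = 0} {p : K × K | p.1 ≠ 0} ∧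
    Set.BijOn (fun α : K × K × K => (α.2.1, α.2.2))
      {α : K × K × K | α.1 = 0 ∧ α.2.2 ≠ 0} {p : K × K | p.2 ≠ 0} := by
  have key : ∀ α : K × K × K, α.1 ≠ 0 → 1 + α.1 * α.2.1 = 0 →
      α.1 + α.2.2 + α.1 * α.2.1 * α.2.2 = α.1 := fun α _ h => by
    linear_combination α.2.2 * h
  refine ⟨?_, ?_, ?_, ?_, key, ⟨?_, ?_, ?_⟩, ⟨?_, ?_, ?_⟩⟩
  · ext α
    simp only [Set.mem_union, Set.mem_ofPred_eq]
    constructor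
    · rintro ((⟨h1, h2⟩ | ⟨h1, h3⟩) | ⟨-, -, h⟩)
      · rwa [key α h1 h2]
      · simpa [h1] using h3
      · exact h
    · intro h
      by_cases h1 : α.1 = 0
      · exact Or.inl (Or.inr ⟨h1, by simpa [h1] using h⟩)
      · by_cases h2 : 1 + α.1 * α.2.1 = 0
        · exact Or.inl (Or.inl ⟨h1, h2⟩)
        · exact Or.inr ⟨h1, h2, h⟩
  · exact Set.disjoint_left.2 fun α h h' => h.1 h'.1
  · exact Set.disjoint_left.2 fun α h h' => h'.2.1 h.2
  · exact Set.disjoint_left.2 fun α h h' => h'.1 h.1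
  · exact fun α h => h.1
  · rintro ⟨a, b, c⟩ ⟨ha, hb⟩ ⟨a', b', c'⟩ ⟨-, hb'⟩ heq
    obtain ⟨rfl, rfl⟩ := Prod.mk.inj heq
    have hbb : b = b' := mul_left_cancel₀ ha (add_left_cancel (hb.trans hb'.symm))
    rw [hbb]
  · rintro ⟨a, c⟩ ha
    -- The equation `1 + a * b = 0` forces the middle coordinate `b = -a⁻¹`.
    exact ⟨(a, -a⁻¹, c), ⟨ha, by simp [mul_inv_cancel₀ (show a ≠ 0 from ha)]⟩, rfl⟩
  · exact fun α h => h.2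
  · rintro ⟨a, b, c⟩ ⟨ha, -⟩ ⟨a', b', c'⟩ ⟨ha', -⟩ heq
    exact Prod.ext (ha.trans ha'.symm) heq
  · rintro ⟨b, c⟩ hc
    exact ⟨(0, b, c), ⟨rfl, hc⟩, rfl⟩
end

section
/- Let K be a field and let V₃ = {α ∈ K³ : α₁ ≠ 0, 1 + α₁α₂ ≠ 0, and α₁ + α₃ + α₁α₂α₃ ≠ 0}. Then the map α ↦ ( −α₁, −α₁⁻¹(1 + α₁α₂), −(1 + α₁α₂)⁻¹(α₁ + α₃ + α₁α₂α₃) ) is a bijection from V₃ onto Kˣ × Kˣ × Kˣ. -/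
/-- The big stratum `V₃ = {α ∈ K³ : α₁ ≠ 0, 1 + α₁α₂ ≠ 0, α₁ + α₃ + α₁α₂α₃ ≠ 0}` of the
trefoil augmentation variety is identified, via the switch coordinates
`(−α₁, −α₁⁻¹(1 + α₁α₂), −(1 + α₁α₂)⁻¹(α₁ + α₃ + α₁α₂α₃))`, with the torus `Kˣ × Kˣ × Kˣ`. -/
theorem trefoil_big_cell_is_torus (K : Type*) [Field K] :
    Set.BijOn
      (fun α : K × K × K =>
        (-α.1, -α.1⁻¹ * (1 + α.1 * α.2.1),
          -(1 + α.1 * α.2.1)⁻¹ * (α.1 + α.2.2 + α.1 * α.2.1 * α.2.2)))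
      {α : K × K × K | α.1 ≠ 0 ∧ 1 + α.1 * α.2.1 ≠ 0 ∧
        α.1 + α.2.2 + α.1 * α.2.1 * α.2.2 ≠ 0}
      {p : K × K × K | p.1 ≠ 0 ∧ p.2.1 ≠ 0 ∧ p.2.2 ≠ 0} := by
  -- Writing `u = 1 + α₁α₂`, the map is `(p, q, r) = (-α₁, -u / α₁, -α₁ / u - α₃)`. Hence
  -- `u = p q`, which can be solved successively for `α₁`, `α₂`, `α₃`.
  refine Set.InvOn.bijOn (f' := fun p : K × K × K => (-p.1, p.1⁻¹ - p.2.1, p.2.1⁻¹ - p.2.2))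
    ⟨?_, ?_⟩ ?_ ?_
  · rintro ⟨a, b, c⟩ ⟨ha, hu, -⟩
    dsimp only at ha hu ⊢
    refine Prod.ext (neg_neg a) (Prod.ext ?_ ?_)
    · dsimp only
      field_simp
      ring
    · dsimp only
      have hw : a + c + a * b * c = a + (1 + a * b) * c := by ring
      rw [hw]
      generalize 1 + a * b = u at hu ⊢
      field_simp
      ring
  · rintro ⟨p, q, r⟩ ⟨hp, hq, -⟩
    dsimp only at hp hq ⊢
    have hu : 1 + -p * (p⁻¹ - q) = p * q := by field_simp; ring
    have hw : -p + (q⁻¹ - r) + -p * (p⁻¹ - q) * (q⁻¹ - r) = -(p * q * r) := by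
      field_simp
      ring
    rw [hu, hw]
    refine Prod.ext (neg_neg p) (Prod.ext ?_ ?_)
    · dsimp only
      field_simp
    · dsimp only
      field_simp
  · rintro ⟨a, b, c⟩ ⟨ha, hu, hw⟩
    exact ⟨neg_ne_zero.2 ha, mul_ne_zero (neg_ne_zero.2 (inv_ne_zero ha)) hu,
      mul_ne_zero (neg_ne_zero.2 (inv_ne_zero hu)) hw⟩
  · rintro ⟨p, q, r⟩ ⟨hp, hq, hr⟩
    dsimp only at hp hq hr
    have hu : 1 + -p * (p⁻¹ - q) = p * q := by field_simp; ring
    have hw : -p + (q⁻¹ - r) + -p * (p⁻¹ - q) * (q⁻¹ - r) = -(p * q * r) := by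
      field_simp
      ring
    refine ⟨neg_ne_zero.2 hp, ?_, ?_⟩
    · dsimp only
      rw [hu]
      exact mul_ne_zero hp hq
    · dsimp only
      rw [hw]
      exact neg_ne_zero.2 (mul_ne_zero (mul_ne_zero hp hq) hr)
end

section
/- Let K be a field and let ℙ¹(K) denote the projective line over K (the set of 1-dimensional subspaces of K²), writing [x : y] for the line spanned by the nonzero vector (x, y), 0 = [1 : 0], and ∞ = [0 : 1]. Then the map sending α ∈ K³ to the triple ( [1 : −α₁], [−α₂ : 1 + α₁α₂], [1 + α₂α₃ : −(α₁ + α₃ + α₁α₂α₃)] ) is a well-defined bijection from {α ∈ K³ : α₁ + α₃ + α₁α₂α₃ ≠ 0} onto the configuration space {(L₂, L₃, L₄) ∈ ℙ¹(K)³ : L₂ ≠ ∞, L₂ ≠ L₃, L₃ ≠ L₄, L₄ ≠ 0}. -/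
/-!
Two points `[x : y]`, `[z : w]` of the projective line agree iff the determinant `x w - z y`
vanishes (`projPt_eq_iff`), so every condition becomes polynomial. Consecutive representatives
`(1, -α₁)`, `(-α₂, 1 + α₁α₂)`, `(1 + α₂α₃, -(α₁ + α₃ + α₁α₂α₃))` have determinant `±1`, hence
consecutive lines are always distinct, while `L₄ ≠ 0` is exactly the nonvanishing condition
on `α`. Conversely, the equations expressing that the image is a given triple are successively
linear in `α₁`, `α₂`, `α₃`, with leading coefficient the determinant of two consecutive lines,
so each coordinate exists and is unique.
-/


open scoped LinearAlgebra.Projectivization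

/-- The point `[x : y]` of the projective line `ℙ¹(K)`, given that `(x, y) ≠ (0, 0)`. -/
noncomputable def projPt (K : Type*) [Field K] (x y : K) (h : x ≠ 0 ∨ y ≠ 0) :
    ℙ K (Fin 2 → K) :=
  Projectivization.mk K ![x, y] (by
    intro h0
    rcases h with h | h
    · exact h (by simpa using congrFun h0 0)
    · exact h (by simpa using congrFun h0 1))

/-- The `augmentations are sheaves` map for the trefoil: to `α = (α₁, α₂, α₃) ∈ K³` it
associates the configuration of lines
`([1 : -α₁], [-α₂ : 1 + α₁α₂], [1 + α₂α₃ : -(α₁ + α₃ + α₁α₂α₃)])` in `ℙ¹(K)³`. -/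
noncomputable def trefoilConfig {K : Type*} [Field K] (α : K × K × K) :
    ℙ K (Fin 2 → K) × ℙ K (Fin 2 → K) × ℙ K (Fin 2 → K) :=
  (projPt K 1 (-α.1) (Or.inl one_ne_zero),
   projPt K (-α.2.1) (1 + α.1 * α.2.1) (by
     by_cases h : α.2.1 = 0
     · exact Or.inr (by simp [h])
     · exact Or.inl (neg_ne_zero.mpr h)),
   projPt K (1 + α.2.1 * α.2.2) (-(α.1 + α.2.2 + α.1 * α.2.1 * α.2.2)) (by
     by_cases h : α.2.2 = 0
     · exact Or.inl (by simp [h])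
     · by_cases h2 : 1 + α.2.1 * α.2.2 = 0
       · refine Or.inr ?_
         have key : α.1 + α.2.2 + α.1 * α.2.1 * α.2.2 = α.2.2 := by
           linear_combination α.1 * h2
         rw [key]
         exact neg_ne_zero.mpr h
       · exact Or.inl h2))

theorem projPt_eq_iff {K : Type*} [Field K] {x y z w : K} (h : x ≠ 0 ∨ y ≠ 0)
    (h' : z ≠ 0 ∨ w ≠ 0) : projPt K x y h = projPt K z w h' ↔ x * w = z * y := by
  unfold projPt
  rw [Projectivization.mk_eq_mk_iff']
  constructor
  · rintro ⟨a, ha⟩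
    have h0 : a * z = x := by simpa using congrFun ha 0
    have h1 : a * w = y := by simpa using congrFun ha 1
    rw [← h0, ← h1]; ring
  · intro e
    rcases h' with hz | hw
    · refine ⟨x / z, ?_⟩
      ext i
      fin_cases i
      · simp [hz]
      · simp; field_simp; exact e
    · refine ⟨y / w, ?_⟩
      ext i
      fin_cases i
      · simp; field_simp; linear_combination -e
      · simp [hw]

theorem exists_eq_projPt {K : Type*} [Field K] (L : ℙ K (Fin 2 → K)) :
    ∃ (x y : K) (h : x ≠ 0 ∨ y ≠ 0), L = projPt K x y h := by
  induction L using Projectivization.ind with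
  | h v hv =>
    have hv' : v = ![v 0, v 1] := by ext i; fin_cases i <;> rfl
    refine ⟨v 0, v 1, ?_, ?_⟩
    · by_contra! hc
      exact hv (by rw [hv', hc.1, hc.2]; ext i; fin_cases i <;> rfl)
    · unfold projPt
      congr 1

/-- `Augmentations are sheaves` for the Legendrian right-handed trefoil: the map
`α ↦ ([1 : -α₁], [-α₂ : 1 + α₁α₂], [1 + α₂α₃ : -(α₁ + α₃ + α₁α₂α₃)])` is a well-defined
bijection from `{α ∈ K³ : α₁ + α₃ + α₁α₂α₃ ≠ 0}` onto the configuration space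
`{(L₂, L₃, L₄) ∈ ℙ¹(K)³ : L₂ ≠ ∞, L₂ ≠ L₃, L₃ ≠ L₄, L₄ ≠ 0}`, where `0 = [1 : 0]` and
`∞ = [0 : 1]`. -/
theorem trefoil_augmentations_are_sheaves (K : Type*) [Field K] :
    Set.BijOn (trefoilConfig (K := K))
      {α : K × K × K | α.1 + α.2.2 + α.1 * α.2.1 * α.2.2 ≠ 0}
      {L : ℙ K (Fin 2 → K) × ℙ K (Fin 2 → K) × ℙ K (Fin 2 → K) |
        L.1 ≠ projPt K 0 1 (Or.inr one_ne_zero) ∧ L.1 ≠ L.2.1 ∧ L.2.1 ≠ L.2.2 ∧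
        L.2.2 ≠ projPt K 1 0 (Or.inl one_ne_zero)} := by
  refine ⟨?_, ?_, ?_⟩
  · rintro ⟨a, b, c⟩ hD
    simp only [Set.mem_ofPred_eq, trefoilConfig, ne_eq, projPt_eq_iff] at hD ⊢
    refine ⟨by simp, fun e => ?_, fun e => ?_, fun e => hD ?_⟩
    · exact one_ne_zero (α := K) (by linear_combination e)
    · exact one_ne_zero (α := K) (by linear_combination -e)
    · linear_combination e
  · rintro ⟨a, b, c⟩ - ⟨a', b', c'⟩ - e
    simp only [trefoilConfig, Prod.mk.injEq, projPt_eq_iff] at e ⊢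
    obtain ⟨e1, e2, e3⟩ := e
    have ha : a = a' := by linear_combination e1
    subst ha
    have hb : b = b' := by linear_combination -e2
    subst hb
    exact ⟨rfl, rfl, by linear_combination e3⟩
  · rintro ⟨L₂, L₃, L₄⟩ hL
    obtain ⟨x, y, hxy, rfl⟩ := exists_eq_projPt L₂
    obtain ⟨u, v, huv, rfl⟩ := exists_eq_projPt L₃
    obtain ⟨p, q, hpq, rfl⟩ := exists_eq_projPt L₄
    obtain ⟨h1, h2, h3, h4⟩ := hL
    simp only [ne_eq, projPt_eq_iff, mul_one, zero_mul, mul_zero, one_mul] at h1 h2 h3 h4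
    obtain ⟨a, ha⟩ : ∃ a : K, y = -a * x := ⟨-(y / x), by field_simp⟩
    subst ha
    have hd : v + a * u ≠ 0 := fun e => h2 (by linear_combination x * e)
    obtain ⟨b, hb⟩ : ∃ b : K, u = -b * (v + a * u) := ⟨-(u / (v + a * u)), by rw [neg_neg, div_mul_cancel₀ _ hd]⟩
    -- `(u, v)` is `v + a u` times the representative `(-b, 1 + a b)`.
    have hv : v = (1 + a * b) * (v + a * u) := by linear_combination -a * hb
    have hd' : p * (1 + a * b) + b * q ≠ 0 := fun e => h3 (by
      linear_combination q * hb - p * hv - (v + a * u) * e)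
    obtain ⟨c, hc⟩ : ∃ c : K, q + p * a = -c * (p * (1 + a * b) + b * q) :=
      ⟨-((q + p * a) / (p * (1 + a * b) + b * q)), by rw [neg_neg, div_mul_cancel₀ _ hd']⟩
    refine ⟨(a, b, c), ?_, ?_⟩
    · intro hD
      simp only at hD
      have hq : (1 + b * c) * q = 0 := by linear_combination hc - p * hD
      have hbc : 1 + b * c = 0 := (mul_eq_zero.mp hq).resolve_right fun e => h4 e.symm
      have hc0 : c = 0 := by linear_combination hD - a * hbc
      simp [hc0] at hbc
    · simp only [trefoilConfig, Prod.mk.injEq, projPt_eq_iff]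
      refine ⟨by ring, by linear_combination -hb, by linear_combination hc⟩
end

section
/- Let K be a field and let S = {α ∈ K³ : 1 + α₁ + α₃ + α₁α₂α₃ = 0}. Define S₁ = {α ∈ S : α₁ ≠ 0 and 1 + α₁α₂ = 0}, S₂ = {α ∈ S : α₁ = 0}, and S₃ = {α ∈ S : α₁ ≠ 0 and 1 + α₁α₂ ≠ 0}. Then S is the disjoint union of S₁, S₂, S₃; moreover S₁ = {(−1, 1, t) : t ∈ K} and S₂ = {(0, t, −1) : t ∈ K}, so each of S₁, S₂ is in bijection with K; and the map α ↦ (α₁, 1 + α₁α₂) is a bijection from S₃ onto Kˣ × Kˣ. -/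
/-!
The defining equation of `S` reads `1 + α₁ + α₃ (1 + α₁ α₂) = 0`. Where `1 + α₁ α₂ = 0` it forces
`α₁ = -1`, hence `α₂ = 1`, and leaves `α₃` free; where `α₁ = 0` it forces `α₃ = -1` and leaves `α₂`
free. Elsewhere `(u, v) = (α₁, 1 + α₁ α₂)` are invertible and determine the point, with
`α₂ = (v - 1) / u` and `α₃ = -(1 + u) / v`.
-/

/-- Cell decomposition of the Betti moduli space of the trefoil: the affine surface
`S = {α ∈ K³ : 1 + α₁ + α₃ + α₁α₂α₃ = 0}` is the disjoint union of
`S₁ = {α ∈ S : α₁ ≠ 0, 1 + α₁α₂ = 0}`, `S₂ = {α ∈ S : α₁ = 0}`,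
`S₃ = {α ∈ S : α₁ ≠ 0, 1 + α₁α₂ ≠ 0}`; moreover `S₁ = {(-1, 1, t) : t ∈ K}`,
`S₂ = {(0, t, -1) : t ∈ K}`, and `α ↦ (α₁, 1 + α₁α₂)` is a bijection from `S₃` onto
`Kˣ × Kˣ`. -/
theorem trefoil_betti_cell_decomposition (K : Type*) [Field K] :
    ({α : K × K × K | (1 + α.1 + α.2.2 + α.1 * α.2.1 * α.2.2 = 0) ∧
        (α.1 ≠ 0 ∧ 1 + α.1 * α.2.1 = 0)} ∪
      {α : K × K × K | (1 + α.1 + α.2.2 + α.1 * α.2.1 * α.2.2 = 0) ∧ α.1 = 0} ∪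
      {α : K × K × K | (1 + α.1 + α.2.2 + α.1 * α.2.1 * α.2.2 = 0) ∧
        (α.1 ≠ 0 ∧ 1 + α.1 * α.2.1 ≠ 0)})
      = {α : K × K × K | 1 + α.1 + α.2.2 + α.1 * α.2.1 * α.2.2 = 0} ∧
    Disjoint
      {α : K × K × K | (1 + α.1 + α.2.2 + α.1 * α.2.1 * α.2.2 = 0) ∧
        (α.1 ≠ 0 ∧ 1 + α.1 * α.2.1 = 0)}
      {α : K × K × K | (1 + α.1 + α.2.2 + α.1 * α.2.1 * α.2.2 = 0) ∧ α.1 = 0} ∧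
    Disjoint
      {α : K × K × K | (1 + α.1 + α.2.2 + α.1 * α.2.1 * α.2.2 = 0) ∧
        (α.1 ≠ 0 ∧ 1 + α.1 * α.2.1 = 0)}
      {α : K × K × K | (1 + α.1 + α.2.2 + α.1 * α.2.1 * α.2.2 = 0) ∧
        (α.1 ≠ 0 ∧ 1 + α.1 * α.2.1 ≠ 0)} ∧
    Disjoint
      {α : K × K × K | (1 + α.1 + α.2.2 + α.1 * α.2.1 * α.2.2 = 0) ∧ α.1 = 0}
      {α : K × K × K | (1 + α.1 + α.2.2 + α.1 * α.2.1 * α.2.2 = 0) ∧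
        (α.1 ≠ 0 ∧ 1 + α.1 * α.2.1 ≠ 0)} ∧
    {α : K × K × K | (1 + α.1 + α.2.2 + α.1 * α.2.1 * α.2.2 = 0) ∧
        (α.1 ≠ 0 ∧ 1 + α.1 * α.2.1 = 0)}
      = Set.range (fun t : K => ((-1 : K), (1 : K), t)) ∧
    {α : K × K × K | (1 + α.1 + α.2.2 + α.1 * α.2.1 * α.2.2 = 0) ∧ α.1 = 0}
      = Set.range (fun t : K => ((0 : K), t, (-1 : K))) ∧
    Set.BijOn (fun α : K × K × K => (α.1, 1 + α.1 * α.2.1))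
      {α : K × K × K | (1 + α.1 + α.2.2 + α.1 * α.2.1 * α.2.2 = 0) ∧
        (α.1 ≠ 0 ∧ 1 + α.1 * α.2.1 ≠ 0)}
      {p : K × K | p.1 ≠ 0 ∧ p.2 ≠ 0} := by
  refine ⟨?_, ?_, ?_, ?_, ?_, ?_, ?_, ?_, ?_⟩
  · ext α
    simp only [Set.mem_union, Set.mem_ofPred_eq]
    tauto
  · exact Set.disjoint_left.2 fun α h₁ h₂ => h₁.2.1 h₂.2
  · exact Set.disjoint_left.2 fun α h₁ h₃ => h₃.2.2 h₁.2.2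
  · exact Set.disjoint_left.2 fun α h₂ h₃ => h₃.2.1 h₂.2
  · ext ⟨a, b, c⟩
    simp only [Set.mem_ofPred_eq, Set.mem_range, Prod.mk.injEq]
    constructor
    · rintro ⟨h, -, hv⟩
      have ha : a = -1 := by linear_combination h - c * hv
      subst ha
      exact ⟨c, rfl, by linear_combination hv, rfl⟩
    · rintro ⟨t, rfl, rfl, rfl⟩
      exact ⟨by ring, neg_ne_zero.2 one_ne_zero, by ring⟩
  · ext ⟨a, b, c⟩
    simp only [Set.mem_ofPred_eq, Set.mem_range, Prod.mk.injEq]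
    constructor
    · rintro ⟨h, rfl⟩
      exact ⟨b, rfl, rfl, by linear_combination -h⟩
    · rintro ⟨t, rfl, rfl, rfl⟩
      exact ⟨by ring, rfl⟩
  · exact fun α h => h.2
  · rintro ⟨a, b, c⟩ ⟨h, ha, hv⟩ ⟨a₂, b₂, c₂⟩ ⟨h₂, -, -⟩ heq
    simp only [Prod.mk.injEq] at h h₂ ha hv heq ⊢
    obtain ⟨rfl, hb⟩ := heq
    have hbb : b = b₂ := mul_left_cancel₀ ha (add_left_cancel hb)
    subst hbb
    exact ⟨rfl, rfl, mul_left_cancel₀ hv (by linear_combination h - h₂)⟩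
  · rintro ⟨u, v⟩ ⟨hu, hv⟩
    simp only at hu hv
    have huv : 1 + u * ((v - 1) / u) = v := by rw [mul_div_cancel₀ _ hu]; ring
    refine ⟨(u, (v - 1) / u, -(1 + u) / v), ⟨?_, hu, ?_⟩, ?_⟩
    · have hc : v * (-(1 + u) / v) = -(1 + u) := mul_div_cancel₀ _ hv
      linear_combination hc + (-(1 + u) / v) * huv
    · exact huv.symm ▸ hv
    · exact Prod.ext rfl huv
end
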